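/- The explicit Fock-like action defines a representation of P_BF^{(1,1)}: the linear operators b⁺, b⁻, f⁺, f⁻ on V (defined on the basis as in the context) satisfy all defining relations of the relative parabose set P_BF^{(1,1)}; that is, writing b^{+1} = b⁺, b^{−1} = b⁻, f^{+1} = f⁺, f^{−1} = f⁻, for all ξ,η,ε ∈ {1,−1} (regarded as integers) the following hold as equalities of linear operators on V: [{b^ξ, b^η}, b^ε] = (ε−η) b^ξ + (ε−ξ) b^η; [[f^ξ, f^η], f^ε] = ½(ε−η)² f^ξ − ½(ε−ξ)² f^η; [{b^ξ, b^η}, f^ε] = 0; [[f^ξ, f^η], b^ε] = 0; [{f^ξ, b^η}, b^ε] = (ε−η) f^ξ; {{b^ξ, f^η}, f^ε} = ½(ε−η)² b^ξ, where [X,Y] := XY − YX and {X,Y} := XY + YX denote composition commutator and anticommutator. -/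

import Mathlib

open scoped BigOperators

/-- Indices of the basis vectors `φ_{m,n}`: pairs `(m,n)` of naturals with `n ≤ p`. -/
abbrev PhiIdx (p : ℕ) := {mn : ℕ × ℕ // mn.2 ≤ p}

/-- Indices of the basis vectors `ψ_{m,n}`: pairs `(m,n)` of naturals with
`1 ≤ m` and `1 ≤ n ≤ p - 1`. -/
abbrev PsiIdx (p : ℕ) := {mn : ℕ × ℕ // 1 ≤ mn.1 ∧ 1 ≤ mn.2 ∧ mn.2 + 1 ≤ p}

/-- The index set of the basis of the Fock-like carrier space. -/
abbrev FockIdx (p : ℕ) := PhiIdx p ⊕ PsiIdx p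

/-- The Fock-like carrier space: the free `ℂ`-vector space on the basis
`{φ_{m,n} : m ≥ 0, 0 ≤ n ≤ p} ∪ {ψ_{m,n} : m ≥ 1, 1 ≤ n ≤ p−1}`. -/
abbrev FockV (p : ℕ) := FockIdx p →₀ ℂ

/-- The vector `φ_{m,n}`, extended by `0` outside the range `m ≥ 0`, `0 ≤ n ≤ p`. -/
noncomputable def phi (p : ℕ) (m n : ℤ) : FockV p :=
  if h : 0 ≤ m ∧ 0 ≤ n ∧ n ≤ (p : ℤ) then
    Finsupp.single (Sum.inl ⟨(m.toNat, n.toNat), by show n.toNat ≤ p; omega⟩) 1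
  else 0

/-- The vector `ψ_{m,n}`, extended by the conventions `ψ_{m,0} = ψ_{0,n} = 0`,
`ψ_{m,p} = (1/p)·φ_{m,p}` (for `m ≥ 1`) and `ψ_{m,n} = 0` outside the range. -/
noncomputable def psi (p : ℕ) (m n : ℤ) : FockV p :=
  if h : 1 ≤ m ∧ 1 ≤ n ∧ n ≤ (p : ℤ) - 1 then
    Finsupp.single (Sum.inr ⟨(m.toNat, n.toNat),
      ⟨by show 1 ≤ m.toNat; omega, by show 1 ≤ n.toNat; omega,
       by show n.toNat + 1 ≤ p; omega⟩⟩) 1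
  else if 1 ≤ m ∧ n = (p : ℤ) then (1 / (p : ℂ)) • phi p m n
  else 0

/-- Image of the basis vector `φ_{m,n}` under `b⁺`. -/
noncomputable def bpPhi (p : ℕ) (m n : ℤ) : FockV p :=
  ((-1 : ℂ) ^ n) • phi p (m + 1) n - (2 * (n : ℂ) * (-1 : ℂ) ^ n) • psi p (m + 1) n

/-- Image of the basis vector `ψ_{m,n}` under `b⁺`. -/
noncomputable def bpPsi (p : ℕ) (m n : ℤ) : FockV p :=
  (-(-1 : ℂ) ^ n) • psi p (m + 1) n

/-- Image of the basis vector `φ_{m,n}` under `b⁻`. -/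
noncomputable def bmPhi (p : ℕ) (m n : ℤ) : FockV p :=
  if Even m then
    ((-1 : ℂ) ^ n * (m : ℂ)) • phi p (m - 1) n
      - (2 * (-1 : ℂ) ^ n * (n : ℂ) * (m : ℂ)) • psi p (m - 1) n
  else
    (-(-1 : ℂ) ^ n * (2 * (n : ℂ) - (m : ℂ) - ((p : ℂ) - 1))) • phi p (m - 1) n
      - (2 * (-1 : ℂ) ^ n * (n : ℂ) * ((m : ℂ) - 1)) • psi p (m - 1) n

/-- Image of the basis vector `ψ_{m,n}` under `b⁻`. -/
noncomputable def bmPsi (p : ℕ) (m n : ℤ) : FockV p :=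
  if Even m then
    (-(-1 : ℂ) ^ n) • phi p (m - 1) n
      + ((-1 : ℂ) ^ n * (2 * (n : ℂ) - (m : ℂ) - (p : ℂ))) • psi p (m - 1) n
  else
    (-(-1 : ℂ) ^ n) • phi p (m - 1) n
      - ((-1 : ℂ) ^ n * ((m : ℂ) - 1)) • psi p (m - 1) n

/-- Image of the basis vector `φ_{m,n}` under `f⁺`. -/
noncomputable def fpPhi (p : ℕ) (m n : ℤ) : FockV p := phi p m (n + 1)

/-- Image of the basis vector `ψ_{m,n}` under `f⁺`. -/
noncomputable def fpPsi (p : ℕ) (m n : ℤ) : FockV p := psi p m (n + 1)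

/-- Image of the basis vector `φ_{m,n}` under `f⁻`. -/
noncomputable def fmPhi (p : ℕ) (m n : ℤ) : FockV p :=
  ((n : ℂ) * ((p : ℂ) + 1 - (n : ℂ))) • phi p m (n - 1)

/-- Image of the basis vector `ψ_{m,n}` under `f⁻`. -/
noncomputable def fmPsi (p : ℕ) (m n : ℤ) : FockV p :=
  phi p m (n - 1) + (((n : ℂ) - 1) * ((p : ℂ) - (n : ℂ))) • psi p m (n - 1)

/-- The linear operator on the Fock-like space determined by its values `F m n`
on the basis vectors `φ_{m,n}` and `G m n` on the basis vectors `ψ_{m,n}`. -/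
noncomputable def mkOp (p : ℕ) (F G : ℤ → ℤ → FockV p) : Module.End ℂ (FockV p) :=
  Finsupp.lift (FockV p) ℂ (FockIdx p) fun x =>
    match x with
    | Sum.inl a => F (a.1.1 : ℤ) (a.1.2 : ℤ)
    | Sum.inr a => G (a.1.1 : ℤ) (a.1.2 : ℤ)

/-- The operator `b⁺`. -/
noncomputable def opBp (p : ℕ) : Module.End ℂ (FockV p) := mkOp p (bpPhi p) (bpPsi p)

/-- The operator `b⁻`. -/
noncomputable def opBm (p : ℕ) : Module.End ℂ (FockV p) := mkOp p (bmPhi p) (bmPsi p)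

/-- The operator `f⁺`. -/
noncomputable def opFp (p : ℕ) : Module.End ℂ (FockV p) := mkOp p (fpPhi p) (fpPsi p)

/-- The operator `f⁻`. -/
noncomputable def opFm (p : ℕ) : Module.End ℂ (FockV p) := mkOp p (fmPhi p) (fmPsi p)

/-- `b^ξ` for a sign `ξ`: `b 1 = b⁺`, `b (-1) = b⁻`. -/
noncomputable def opB (p : ℕ) (ξ : ℤ) : Module.End ℂ (FockV p) :=
  if ξ = 1 then opBp p else opBm p

/-- `f^ξ` for a sign `ξ`: `f 1 = f⁺`, `f (-1) = f⁻`. -/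
noncomputable def opF (p : ℕ) (ξ : ℤ) : Module.End ℂ (FockV p) :=
  if ξ = 1 then opFp p else opFm p

/-- The commutator `[X, Y] = X∘Y − Y∘X` of operators. -/
noncomputable def opComm {p : ℕ} (X Y : Module.End ℂ (FockV p)) : Module.End ℂ (FockV p) :=
  X * Y - Y * X

/-- The anticommutator `{X, Y} = X∘Y + Y∘X` of operators. -/
noncomputable def opAComm {p : ℕ} (X Y : Module.End ℂ (FockV p)) : Module.End ℂ (FockV p) :=
  X * Y + Y * X

/-- A sign, i.e. `+1` or `-1`, regarded as an integer. -/
def IsSign (x : ℤ) : Prop := x = 1 ∨ x = -1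

/-!
The squares `(b⁺)²`, `(b⁻)²` and `H = {b⁺, b⁻}` span an `sl₂` that commutes with `f⁺` and `f⁻`.
Both `H` and `K = [f⁺, f⁻]` are diagonal: they multiply `φ_{m,n}` and `ψ_{m,n}` by `2m + p` and
`2n - p`, so their brackets with the generators are read off from the shifts of `m` and `n`.
The mixed relations rest on `Q = {b⁺, f⁺}`, which sends `φ_{m,n}` to `2(-1)ⁿ ψ_{m+1,n+1}` and
kills every `ψ_{m,n}`. The relations of `b⁻` with two `f`s follow from those of `b⁺` because
`2b⁻ = [(b⁻)², b⁺]`, and `[{b⁺, f⁻}, b⁻] = -2f⁻` is obtained from `[Q, b⁻] = -2f⁺` by bracketing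
twice with `f⁻`.

The formulas defining the generators remain valid on the vectors that vanish or are rescaled by the
index conventions, apart from a few boundary indices. This is why `φ` and `ψ` can be handled with
integer indices, without separating the top row `n = p`.
-/

section ColorJacobi

attribute [local instance] LieRing.ofAssociativeRing

variable {A : Type*} [Ring A]

lemma lie_mul_self_left (x y : A) : ⁅x * x, y⁆ = -⁅x * y + y * x, x⁆ := by
  simp only [Ring.lie_def]
  noncomm_ring

lemma lie_anticomm_cyclic (x y z : A) :
    ⁅x * y + y * x, z⁆ + ⁅y * z + z * y, x⁆ + ⁅z * x + x * z, y⁆ = 0 := by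
  simp only [Ring.lie_def]
  noncomm_ring

lemma anticomm_anticomm_right_comm (x y z : A) :
    (x * y + y * x) * z + z * (x * y + y * x) =
      (x * z + z * x) * y + y * (x * z + z * x) + ⁅⁅z, y⁆, x⁆ := by
  simp only [Ring.lie_def]
  noncomm_ring

lemma anticomm_lie_of_commute {x z : A} (h : Commute x z) (y : A) :
    ⁅x, y⁆ * z + z * ⁅x, y⁆ = ⁅x, y * z + z * y⁆ := by
  have hxz : x * z = z * x := h
  simp only [Ring.lie_def]
  linear_combination (norm := noncomm_ring) -(hxz * y) - y * hxz

lemma lie_anticomm_eq_neg_two_smul {K : Type*} [Field K] [NeZero (2 : K)] [Algebra K A]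
    {b c f g : A}
    (hb : (b * f + f * b) * g + g * (b * f + f * b) = (2 : K) • b)
    (hc : (c * g + g * c) * g + g * (c * g + g * c) = 0)
    (hf : ⁅b * f + f * b, c⁆ = (-2 : K) • f)
    (hH : ⁅b * c + c * b, g⁆ = 0) (hK : ⁅⁅f, g⁆, g⁆ = (-2 : K) • g) :
    ⁅b * g + g * b, c⁆ = (-2 : K) • g := by
  set Q := b * f + f * b
  set R := c * g + g * c with hR
  have hgQ : g * Q + Q * g = (2 : K) • b := by rw [add_comm, hb]
  have hQR : Q * R + R * Q = (2 : K) • (b * c + c * b) - (2 : K) • ⁅f, g⁆ := by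
    have h := anticomm_anticomm_right_comm g c Q
    rw [hgQ, hf, add_comm (g * c), ← hR, add_comm (R * Q)] at h
    rw [h, smul_mul_assoc, mul_smul_comm, smul_lie]
    module
  have hRb : (2 : K) • ⁅R, b⁆ = (2 : K) • (2 : K) • g := by
    have h := lie_anticomm_cyclic Q R g
    rw [hQR, hc, hgQ, zero_lie, add_zero, sub_lie, smul_lie, smul_lie, smul_lie, hH, hK,
      ← lie_skew b R] at h
    linear_combination (norm := module) -h
  have h := lie_anticomm_cyclic b g c
  rw [add_comm (g * c), ← hR, add_comm (c * b), hH, add_zero,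
    smul_right_injective A (two_ne_zero' K) hRb] at h
  linear_combination (norm := module) h

end ColorJacobi

lemma neg_one_zpow_add_one {K : Type*} [DivisionRing K] (n : ℤ) :
    (-1 : K) ^ (n + 1) = -(-1) ^ n := by
  rw [zpow_add_one₀ (by simp), mul_neg_one]

lemma neg_one_zpow_sub_one {K : Type*} [DivisionRing K] (n : ℤ) :
    (-1 : K) ^ (n - 1) = -(-1) ^ n := by
  rw [← neg_neg ((-1 : K) ^ (n - 1)), ← neg_one_zpow_add_one, sub_add_cancel]

lemma opComm_apply {p : ℕ} (X Y : Module.End ℂ (FockV p)) (v : FockV p) :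
    opComm X Y v = X (Y v) - Y (X v) :=
  rfl

lemma opAComm_apply {p : ℕ} (X Y : Module.End ℂ (FockV p)) (v : FockV p) :
    opAComm X Y v = X (Y v) + Y (X v) :=
  rfl

section Conventions

variable {p : ℕ} {m n : ℤ}

lemma phi_eq_zero (h : ¬(0 ≤ m ∧ 0 ≤ n ∧ n ≤ p)) : phi p m n = 0 :=
  dif_neg h

lemma psi_eq_zero (h : ¬(1 ≤ m ∧ 1 ≤ n ∧ n ≤ p)) : psi p m n = 0 := by
  rw [psi, dif_neg (by omega)]
  split_ifs with htop
  · obtain rfl : p = 0 := by omega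
    simp
  · rfl

lemma psi_top (hm : 1 ≤ m) : psi p m p = (1 / (p : ℂ)) • phi p m p := by
  rw [psi, dif_neg (by omega), if_pos ⟨hm, rfl⟩]

lemma phi_top (hp : 1 ≤ p) (hm : 1 ≤ m) : phi p m p = (p : ℂ) • psi p m p := by
  have hp0 : (p : ℂ) ≠ 0 := Nat.cast_ne_zero.mpr (by omega)
  rw [psi_top hm, smul_smul, mul_one_div_cancel hp0, one_smul]

end Conventions

section Generators

variable {p : ℕ} {m n : ℤ} {F G : ℤ → ℤ → FockV p}

lemma mkOp_phi (hF : ¬(0 ≤ m ∧ 0 ≤ n ∧ n ≤ p) → F m n = 0) :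
    mkOp p F G (phi p m n) = F m n := by
  by_cases h : 0 ≤ m ∧ 0 ≤ n ∧ n ≤ p
  · simp [phi, h, mkOp]
  · rw [phi_eq_zero h, map_zero, hF h]

lemma mkOp_psi (hF : 1 ≤ m → 1 ≤ p → F m p = (p : ℂ) • G m p)
    (hG : ¬(1 ≤ m ∧ 1 ≤ n ∧ n ≤ p) → G m n = 0) :
    mkOp p F G (psi p m n) = G m n := by
  by_cases h : 1 ≤ m ∧ 1 ≤ n ∧ n ≤ p
  · obtain ⟨hm, hn, hnp⟩ := h
    rcases hnp.lt_or_eq with hlt | rfl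
    · have hrange : 1 ≤ m ∧ 1 ≤ n ∧ n ≤ (p : ℤ) - 1 := by omega
      have hm0 : 0 ≤ m := by omega
      have hn0 : 0 ≤ n := by omega
      simp [psi, hrange, mkOp, hm0, hn0]
    · have hp : (p : ℂ) ≠ 0 := Nat.cast_ne_zero.mpr (by omega)
      rw [psi_top hm, map_smul, mkOp_phi (by omega), hF hm (by omega), smul_smul,
        one_div_mul_cancel hp, one_smul]
  · rw [psi_eq_zero h, map_zero, hG h]

lemma FockV.end_ext {X Y : Module.End ℂ (FockV p)}
    (hphi : ∀ m n : ℤ, 0 ≤ m → 0 ≤ n → X (phi p m n) = Y (phi p m n))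
    (hpsi : ∀ m n : ℤ, 1 ≤ m → 1 ≤ n → X (psi p m n) = Y (psi p m n)) : X = Y := by
  refine Finsupp.lhom_ext' ?_
  rintro (⟨⟨m, n⟩, h⟩ | ⟨⟨m, n⟩, h⟩) <;> refine LinearMap.ext_ring ?_
  · have hrange : (n : ℤ) ≤ p := by exact_mod_cast h
    simpa [phi, hrange] using hphi m n (by positivity) (by positivity)
  · have hrange : 1 ≤ (m : ℤ) ∧ 1 ≤ (n : ℤ) ∧ (n : ℤ) ≤ (p : ℤ) - 1 := by
      dsimp at h; omega
    simpa [psi, hrange] using hpsi m n hrange.1 hrange.2.1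

lemma opBp_phi (hm : 0 ≤ m) : opBp p (phi p m n) = bpPhi p m n :=
  mkOp_phi fun h => by
    rw [bpPhi, phi_eq_zero (by omega), psi_eq_zero (by omega), smul_zero, smul_zero, sub_zero]

lemma opBp_psi (hm : 1 ≤ m) : opBp p (psi p m n) = bpPsi p m n := by
  refine mkOp_psi (fun _ hp => ?_) fun h => ?_
  · rw [bpPhi, bpPsi, phi_top hp (by omega)]
    push_cast
    module
  · rw [bpPsi, psi_eq_zero (by omega), smul_zero]

lemma opFp_phi (hn : 0 ≤ n) : opFp p (phi p m n) = phi p m (n + 1) :=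
  mkOp_phi fun h => phi_eq_zero (by omega)

lemma opFp_psi (hn : 1 ≤ n) : opFp p (psi p m n) = psi p m (n + 1) :=
  mkOp_psi (fun _ _ => by simp [fpPhi, fpPsi, phi_eq_zero, psi_eq_zero])
    fun h => psi_eq_zero (by omega)

lemma opFm_phi : opFm p (phi p m n) = fmPhi p m n := by
  refine mkOp_phi fun h => ?_
  by_cases htop : n = p + 1
  · simp [fmPhi, htop]
  by_cases hbot : n = 0
  · simp [fmPhi, hbot]
  · rw [fmPhi, phi_eq_zero (by omega), smul_zero]

lemma opFm_psi (hp : 1 ≤ p) (hm : 1 ≤ m) : opFm p (psi p m n) = fmPsi p m n := by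
  refine mkOp_psi (fun _ _ => ?_) fun h => ?_
  · rw [fmPhi, fmPsi]
    push_cast
    module
  · rw [fmPsi]
    by_cases htop : n = p + 1
    · subst htop
      simp [phi_top hp hm]
    · rw [phi_eq_zero (by omega), psi_eq_zero (by omega)]
      simp

lemma opBm_phi : opBm p (phi p m n) = bmPhi p m n := by
  refine mkOp_phi fun h => ?_
  by_cases hm : m = 0
  · simp [bmPhi, hm]
  · rw [bmPhi, phi_eq_zero (by omega), psi_eq_zero (by omega)]
    simp

lemma opBm_psi (hn : 1 ≤ n) : opBm p (psi p m n) = bmPsi p m n := by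
  refine mkOp_psi (fun hm hp => ?_) fun h => ?_
  · rcases hm.eq_or_lt with rfl | hm
    · simp only [bmPhi, bmPsi, Int.not_even_one, if_false]
      push_cast
      module
    · rw [bmPhi, bmPsi, phi_top hp (by omega)]
      split_ifs <;> push_cast <;> module
  · rw [bmPsi, phi_eq_zero (by omega), psi_eq_zero (by omega)]
    simp

end Generators

section Quadratic

variable {p : ℕ} {m n : ℤ}

lemma opBp_mul_opBp_phi (hm : 0 ≤ m) : (opBp p * opBp p) (phi p m n) = phi p (m + 2) n := by
  have hadd : m + 1 + 1 = m + 2 := by ring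
  by_cases hs : Even n <;>
  · simp (disch := omega) only [Module.End.mul_apply, opBp_phi, opBp_psi, bpPhi, bpPsi, map_sub,
      map_smul, neg_one_zpow_eq_ite, hs, if_true, if_false, hadd]
    module

lemma opBp_mul_opBp_psi (hm : 1 ≤ m) : (opBp p * opBp p) (psi p m n) = psi p (m + 2) n := by
  have hadd : m + 1 + 1 = m + 2 := by ring
  by_cases hs : Even n <;>
  · simp (disch := omega) only [Module.End.mul_apply, opBp_psi, bpPsi, map_smul,
      neg_one_zpow_eq_ite, hs, if_true, if_false, hadd]
    module

lemma opBm_mul_opBm_phi : (opBm p * opBm p) (phi p m n) =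
    if Even m then ((m : ℂ) * (m + p - 2)) • phi p (m - 2) n
      else (((m : ℂ) - 1) * (m + p - 1)) • phi p (m - 2) n := by
  have hsub : m - 1 - 1 = m - 2 := by ring
  obtain hn | rfl | hn := lt_trichotomy n 0
  · rw [phi_eq_zero (by omega), phi_eq_zero (by omega)]
    simp
  · by_cases hm : Even m <;>
    · simp only [Module.End.mul_apply, opBm_phi, bmPhi, map_smul, hm, Int.even_sub_one,
        zpow_zero, Int.cast_zero, mul_zero, zero_mul, zero_smul, sub_zero, not_true_eq_false,
        not_false_eq_true, if_true, if_false, hsub]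
      push_cast
      module
  · by_cases hm : Even m <;> by_cases hs : Even n <;>
    · simp (disch := omega) only [Module.End.mul_apply, opBm_phi, opBm_psi, bmPhi, bmPsi, map_sub,
        map_smul, hm, Int.even_sub_one, neg_one_zpow_eq_ite, hs, not_true_eq_false,
        not_false_eq_true, if_true, if_false, hsub]
      push_cast
      module

lemma opBm_mul_opBm_psi (hn : 1 ≤ n) : (opBm p * opBm p) (psi p m n) =
    if Even m then (2 : ℂ) • phi p (m - 2) n + (((m : ℂ) - 2) * (m + p)) • psi p (m - 2) n
      else (((m : ℂ) - 1) * (m + p - 1)) • psi p (m - 2) n := by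
  have hsub : m - 1 - 1 = m - 2 := by ring
  by_cases hm : Even m <;> by_cases hs : Even n <;>
  · simp (disch := omega) only [Module.End.mul_apply, opBm_phi, opBm_psi, bmPhi, bmPsi, map_add,
      map_sub, map_smul, hm, Int.even_sub_one, neg_one_zpow_eq_ite, hs, not_true_eq_false,
      not_false_eq_true, if_true, if_false, hsub]
    push_cast
    module

lemma opBm_mul_opBp_phi (hm : 0 ≤ m) (hn : 0 ≤ n) : (opBm p * opBp p) (phi p m n) =
    if Even m then (m + p : ℂ) • phi p m n
      else (m + 1 + 2 * n : ℂ) • phi p m n - (2 * n * (2 * n - p) : ℂ) • psi p m n := by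
  rcases hn.eq_or_lt with rfl | hpos
  · by_cases heven : Even m <;>
    · simp (disch := omega) only [Module.End.mul_apply, opBp_phi, bpPhi, opBm_phi, bmPhi,
        psi_eq_zero, heven, Int.even_add_one, zpow_zero, Int.cast_zero, mul_zero,
        smul_zero, sub_zero, not_true_eq_false, not_false_eq_true, if_true, if_false,
        map_smul, add_sub_cancel_right]
      push_cast
      module
  · by_cases heven : Even m <;> by_cases hs : Even n <;>
    · simp (disch := omega) only [Module.End.mul_apply, opBp_phi, bpPhi, opBm_phi, opBm_psi, bmPhi,
        bmPsi, map_sub, map_smul, heven, Int.even_add_one, neg_one_zpow_eq_ite, hs,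
        not_true_eq_false, not_false_eq_true, if_true, if_false, add_sub_cancel_right]
      push_cast
      module

lemma opBp_mul_opBm_phi (hm : 0 ≤ m) : (opBp p * opBm p) (phi p m n) =
    if Even m then (m : ℂ) • phi p m n
      else (m + p - 1 - 2 * n : ℂ) • phi p m n + (2 * n * (2 * n - p) : ℂ) • psi p m n := by
  obtain rfl | rfl | hm : m = 0 ∨ m = 1 ∨ 2 ≤ m := by omega
  · simp [opBm_phi, bmPhi]
  · by_cases hs : Even n <;>
    · simp (disch := omega) only [Module.End.mul_apply, opBm_phi, bmPhi, opBp_phi, bpPhi,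
        psi_eq_zero, Int.not_even_one, sub_self, zero_add, map_sub, map_smul, map_zero, smul_zero,
        neg_one_zpow_eq_ite, hs, if_true, if_false]
      push_cast
      module
  · by_cases heven : Even m <;> by_cases hs : Even n <;>
    · simp (disch := omega) only [Module.End.mul_apply, opBm_phi, bmPhi, opBp_phi, bpPhi, opBp_psi,
        bpPsi, map_sub, map_smul, neg_one_zpow_eq_ite, heven, hs, if_true, if_false, sub_add_cancel]
      module

lemma opBm_mul_opBp_psi (hm : 1 ≤ m) (hn : 1 ≤ n) : (opBm p * opBp p) (psi p m n) =
    if Even m then phi p m n + (m : ℂ) • psi p m n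
      else phi p m n + (m + 1 + p - 2 * n : ℂ) • psi p m n := by
  by_cases heven : Even m <;> by_cases hs : Even n <;>
  · simp (disch := omega) only [Module.End.mul_apply, opBp_psi, bpPsi, opBm_psi, bmPsi, map_smul,
      heven, Int.even_add_one, neg_one_zpow_eq_ite, hs, not_true_eq_false, not_false_eq_true,
      if_true, if_false, add_sub_cancel_right]
    push_cast
    module

lemma opBp_mul_opBm_psi (hm : 1 ≤ m) (hn : 1 ≤ n) : (opBp p * opBm p) (psi p m n) =
    if Even m then (m + p : ℂ) • psi p m n - phi p m n
      else (m - 1 + 2 * n : ℂ) • psi p m n - phi p m n := by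
  rcases hm.eq_or_lt with rfl | hm
  · by_cases hs : Even n <;>
    · simp (disch := omega) only [Module.End.mul_apply, opBm_psi, bmPsi, opBp_phi, bpPhi,
        psi_eq_zero, Int.not_even_one, sub_self, zero_add, map_sub, map_smul, map_zero, smul_zero,
        neg_one_zpow_eq_ite, hs, if_true, if_false]
      push_cast
      module
  · by_cases heven : Even m <;> by_cases hs : Even n <;>
    · simp (disch := omega) only [Module.End.mul_apply, opBm_psi, bmPsi, opBp_phi, bpPhi, opBp_psi,
        bpPsi, map_add, map_sub, map_smul, neg_one_zpow_eq_ite, heven, hs, if_true, if_false,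
        sub_add_cancel]
      module

lemma opAComm_opBp_opBm_phi :
    opAComm (opBp p) (opBm p) (phi p m n) = (2 * m + p : ℂ) • phi p m n := by
  by_cases h : 0 ≤ m ∧ 0 ≤ n ∧ n ≤ p
  · rw [opAComm, LinearMap.add_apply, opBp_mul_opBm_phi h.1, opBm_mul_opBp_phi h.1 h.2.1]
    split_ifs <;> module
  · rw [phi_eq_zero h, map_zero, smul_zero]

lemma opAComm_opBp_opBm_psi :
    opAComm (opBp p) (opBm p) (psi p m n) = (2 * m + p : ℂ) • psi p m n := by
  by_cases h : 1 ≤ m ∧ 1 ≤ n ∧ n ≤ p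
  · rw [opAComm, LinearMap.add_apply, opBp_mul_opBm_psi h.1 h.2.1, opBm_mul_opBp_psi h.1 h.2.1]
    split_ifs <;> module
  · rw [psi_eq_zero h, map_zero, smul_zero]

lemma opComm_opFp_opFm_phi :
    opComm (opFp p) (opFm p) (phi p m n) = (2 * n - p : ℂ) • phi p m n := by
  by_cases h : 0 ≤ m ∧ 0 ≤ n ∧ n ≤ p
  · obtain ⟨-, hn, -⟩ := h
    rcases hn.eq_or_lt with rfl | hn
    · simp (disch := omega) [opComm_apply, opFm_phi, opFp_phi, fmPhi]
    · simp (disch := omega) only [opComm_apply, opFm_phi, opFp_phi, fmPhi, map_smul,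
        sub_add_cancel, add_sub_cancel_right]
      push_cast
      module
  · rw [phi_eq_zero h, map_zero, smul_zero]

lemma opComm_opFp_opFm_psi :
    opComm (opFp p) (opFm p) (psi p m n) = (2 * n - p : ℂ) • psi p m n := by
  by_cases h : 1 ≤ m ∧ 1 ≤ n ∧ n ≤ p
  · obtain ⟨hm, hn, hnp⟩ := h
    rcases hn.eq_or_lt with rfl | hn
    · simp (disch := omega) only [opComm_apply, opFm_psi, opFp_phi, opFp_psi, fmPsi,
        psi_eq_zero, map_add, map_smul, map_zero, sub_self, zero_add, add_sub_cancel_right]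
      push_cast
      module
    · simp (disch := omega) only [opComm_apply, opFm_psi, opFp_phi, opFp_psi, fmPsi, map_add,
        map_smul, sub_add_cancel, add_sub_cancel_right]
      push_cast
      module
  · rw [psi_eq_zero h, map_zero, smul_zero]

lemma opAComm_opBp_opFp_phi :
    opAComm (opBp p) (opFp p) (phi p m n) = (2 * (-1) ^ n : ℂ) • psi p (m + 1) (n + 1) := by
  by_cases h : 0 ≤ m ∧ 0 ≤ n ∧ n ≤ p
  · obtain ⟨hm, hn, -⟩ := h
    rcases hn.eq_or_lt with rfl | hn
    · simp (disch := omega) only [opAComm_apply, opBp_phi, bpPhi, opFp_phi, psi_eq_zero, map_sub,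
        map_smul, map_zero, zpow_zero, Int.cast_zero, neg_one_zpow_add_one]
      push_cast
      module
    · simp (disch := omega) only [opAComm_apply, opBp_phi, bpPhi, opFp_phi, opFp_psi, map_sub,
        map_smul, neg_one_zpow_add_one]
      push_cast
      module
  · rw [phi_eq_zero h, psi_eq_zero (by omega), map_zero, smul_zero]

lemma opAComm_opBp_opFp_psi : opAComm (opBp p) (opFp p) (psi p m n) = 0 := by
  by_cases h : 1 ≤ m ∧ 1 ≤ n ∧ n ≤ p
  · obtain ⟨hm, hn, -⟩ := h
    simp (disch := omega) only [opAComm_apply, opBp_psi, bpPsi, opFp_psi, map_smul,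
      neg_one_zpow_add_one]
    module
  · rw [psi_eq_zero h, map_zero]

lemma opAComm_opBp_opFm_phi (hp : 1 ≤ p) (hm : 0 ≤ m) :
    opAComm (opBp p) (opFm p) (phi p m n) = ((-1) ^ n * (-2 * n) : ℂ) • phi p (m + 1) (n - 1)
      + ((-1) ^ n * (2 * n * (n - 1)) : ℂ) • psi p (m + 1) (n - 1) := by
  simp (disch := omega) only [opAComm_apply, opBp_phi, bpPhi, opFm_phi, fmPhi, opFm_psi, fmPsi,
    map_sub, map_smul, neg_one_zpow_sub_one]
  push_cast
  module

lemma opAComm_opBp_opFm_psi (hp : 1 ≤ p) (hm : 1 ≤ m) :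
    opAComm (opBp p) (opFm p) (psi p m n) = (-2 * (-1) ^ n : ℂ) • phi p (m + 1) (n - 1)
      + ((-1) ^ n * (2 * (n - 1)) : ℂ) • psi p (m + 1) (n - 1) := by
  simp (disch := omega) only [opAComm_apply, opBp_psi, opBp_phi, bpPsi, bpPhi, opFm_psi, fmPsi,
    map_add, map_smul, neg_one_zpow_sub_one]
  push_cast
  module

end Quadratic

section Relations

variable {p : ℕ}

lemma opComm_opAComm_opBp_opBm_opBp :
    opComm (opAComm (opBp p) (opBm p)) (opBp p) = (2 : ℂ) • opBp p := by
  apply FockV.end_ext <;> intro m n hm _ <;>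
  · simp (disch := assumption) only [opComm_apply, opBp_phi, opBp_psi, bpPhi, bpPsi, map_sub,
      map_smul, opAComm_opBp_opBm_phi, opAComm_opBp_opBm_psi, LinearMap.smul_apply]
    push_cast
    module

lemma opComm_opAComm_opBp_opBm_opBm :
    opComm (opAComm (opBp p) (opBm p)) (opBm p) = (-2 : ℂ) • opBm p := by
  apply FockV.end_ext <;> intro m n _ hn <;> by_cases heven : Even m <;>
  · simp (disch := assumption) only [opComm_apply, opBm_phi, opBm_psi, bmPhi, bmPsi, heven,
      if_true, if_false, map_add, map_sub, map_smul, opAComm_opBp_opBm_phi, opAComm_opBp_opBm_psi,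
      LinearMap.smul_apply]
    push_cast
    module

lemma opComm_opAComm_opBp_opBm_opFp : opComm (opAComm (opBp p) (opBm p)) (opFp p) = 0 := by
  apply FockV.end_ext <;> intro m n _ hn <;>
  · simp (disch := assumption) only [opComm_apply, opFp_phi, opFp_psi, map_smul,
      opAComm_opBp_opBm_phi, opAComm_opBp_opBm_psi, LinearMap.zero_apply]
    module

lemma opComm_opAComm_opBp_opBm_opFm (hp : 1 ≤ p) :
    opComm (opAComm (opBp p) (opBm p)) (opFm p) = 0 := by
  apply FockV.end_ext <;> intro m n hm _ <;>
  · simp (disch := assumption) only [opComm_apply, opFm_phi, opFm_psi, fmPhi, fmPsi, map_add,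
      map_smul, opAComm_opBp_opBm_phi, opAComm_opBp_opBm_psi, LinearMap.zero_apply]
    module

lemma opComm_opComm_opFp_opFm_opFp :
    opComm (opComm (opFp p) (opFm p)) (opFp p) = (2 : ℂ) • opFp p := by
  apply FockV.end_ext <;> intro m n _ hn <;>
  · simp (disch := assumption) only [opComm_apply (opComm _ _), opFp_phi, opFp_psi, map_smul,
      opComm_opFp_opFm_phi, opComm_opFp_opFm_psi, LinearMap.smul_apply]
    push_cast
    module

lemma opComm_opComm_opFp_opFm_opFm (hp : 1 ≤ p) :
    opComm (opComm (opFp p) (opFm p)) (opFm p) = (-2 : ℂ) • opFm p := by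
  apply FockV.end_ext <;> intro m n hm _ <;>
  · simp (disch := assumption) only [opComm_apply (opComm _ _), opFm_phi, opFm_psi, fmPhi, fmPsi,
      map_add, map_smul, opComm_opFp_opFm_phi, opComm_opFp_opFm_psi, LinearMap.smul_apply]
    push_cast
    module

lemma opComm_opComm_opFp_opFm_opBp : opComm (opComm (opFp p) (opFm p)) (opBp p) = 0 := by
  apply FockV.end_ext <;> intro m n hm _ <;>
  · simp (disch := assumption) only [opComm_apply (opComm _ _), opBp_phi, opBp_psi, bpPhi, bpPsi,
      map_sub, map_smul, opComm_opFp_opFm_phi, opComm_opFp_opFm_psi, LinearMap.zero_apply]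
    module

lemma opComm_opComm_opFp_opFm_opBm : opComm (opComm (opFp p) (opFm p)) (opBm p) = 0 := by
  apply FockV.end_ext <;> intro m n _ hn <;> by_cases heven : Even m <;>
  · simp (disch := assumption) only [opComm_apply (opComm _ _), opBm_phi, opBm_psi, bmPhi, bmPsi,
      heven, if_true, if_false, map_add, map_sub, map_smul, opComm_opFp_opFm_phi,
      opComm_opFp_opFm_psi, LinearMap.zero_apply]
    module

lemma commute_opBp_mul_opBp_opFp : Commute (opBp p * opBp p) (opFp p) := by
  apply FockV.end_ext <;> intro m n hm hn <;>
  · simp (disch := assumption) only [Module.End.mul_apply (_ * _), Module.End.mul_apply _ (_ * _),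
      opFp_phi, opFp_psi, opBp_mul_opBp_phi, opBp_mul_opBp_psi]

lemma commute_opBp_mul_opBp_opFm (hp : 1 ≤ p) : Commute (opBp p * opBp p) (opFm p) := by
  apply FockV.end_ext <;> intro m n hm _ <;>
  · simp (disch := omega) only [Module.End.mul_apply (_ * _), Module.End.mul_apply _ (_ * _),
      opFm_phi, opFm_psi, fmPhi, fmPsi, map_add, map_smul, opBp_mul_opBp_phi, opBp_mul_opBp_psi]

lemma commute_opBm_mul_opBm_opFp : Commute (opBm p * opBm p) (opFp p) := by
  apply FockV.end_ext <;> intro m n _ hn <;> by_cases heven : Even m <;>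
  · simp (disch := omega) only [Module.End.mul_apply (_ * _), Module.End.mul_apply _ (_ * _),
      opFp_phi, opFp_psi, opBm_mul_opBm_phi, opBm_mul_opBm_psi, heven, if_true, if_false, map_smul,
      map_add]

lemma commute_opBm_mul_opBm_opFm (hp : 1 ≤ p) : Commute (opBm p * opBm p) (opFm p) := by
  apply FockV.end_ext <;> intro m n hm hn
  · by_cases heven : Even m <;>
    · simp (disch := omega) only [Module.End.mul_apply (_ * _), Module.End.mul_apply _ (_ * _),
        opFm_phi, fmPhi, opBm_mul_opBm_phi, heven, if_true, if_false, map_smul]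
      module
  · obtain hm | rfl | rfl : 3 ≤ m ∨ m = 1 ∨ m = 2 := by omega
    · rcases hn.eq_or_lt with rfl | hn <;> by_cases heven : Even m <;>
      · simp (disch := omega) only [Module.End.mul_apply (_ * _), Module.End.mul_apply _ (_ * _),
          opFm_phi, opFm_psi, fmPhi, fmPsi, psi_eq_zero, opBm_mul_opBm_phi, opBm_mul_opBm_psi,
          heven, if_true, if_false, map_add, map_smul, map_zero, smul_zero]
        push_cast
        module
    all_goals
      rcases hn.eq_or_lt with rfl | hn <;>
      · simp (disch := omega) only [Module.End.mul_apply (_ * _), Module.End.mul_apply _ (_ * _),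
          opFm_phi, opFm_psi, fmPhi, fmPsi, psi_eq_zero, opBm_mul_opBm_phi, opBm_mul_opBm_psi,
          Int.not_even_one, even_two, if_true, if_false, map_add, map_smul, map_zero, smul_zero]
        push_cast
        module

lemma opComm_opAComm_opBp_opFp_opBm :
    opComm (opAComm (opBp p) (opFp p)) (opBm p) = (-2 : ℂ) • opFp p := by
  apply FockV.end_ext <;> intro m n _ hn <;>
  by_cases heven : Even m <;> by_cases hs : Even n <;>
  · simp (disch := omega) only [opComm_apply, opBm_phi, opBm_psi, bmPhi, bmPsi, heven,
      Int.even_add_one, not_true_eq_false, not_false_eq_true, if_true, if_false, map_add, map_sub,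
      map_smul, map_zero, opAComm_opBp_opFp_phi, opAComm_opBp_opFp_psi, LinearMap.smul_apply,
      opFp_phi, opFp_psi, neg_one_zpow_eq_ite, hs, sub_add_cancel, add_sub_cancel_right]
    push_cast
    module

lemma opAComm_opAComm_opBp_opFp_opFp :
    opAComm (opAComm (opBp p) (opFp p)) (opFp p) = 0 := by
  apply FockV.end_ext <;> intro m n _ hn
  · simp (disch := omega) only [opAComm_apply (opAComm _ _), opFp_phi, opFp_psi, map_smul,
      opAComm_opBp_opFp_phi, neg_one_zpow_add_one, LinearMap.zero_apply]
    module
  · simp (disch := omega) only [opAComm_apply (opAComm _ _), opFp_psi, opAComm_opBp_opFp_psi,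
      map_zero, add_zero, LinearMap.zero_apply]

lemma opAComm_opAComm_opBp_opFp_opFm (hp : 1 ≤ p) :
    opAComm (opAComm (opBp p) (opFp p)) (opFm p) = (2 : ℂ) • opBp p := by
  apply FockV.end_ext <;> intro m n hm _
  · simp (disch := omega) only [opAComm_apply (opAComm _ _), opFm_phi, fmPhi, opFm_psi, fmPsi,
      map_smul, opAComm_opBp_opFp_phi, neg_one_zpow_sub_one, LinearMap.smul_apply, opBp_phi, bpPhi,
      sub_add_cancel, add_sub_cancel_right]
    push_cast
    module
  · simp (disch := omega) only [opAComm_apply (opAComm _ _), opFm_psi, fmPsi, map_add, map_smul,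
      map_zero, opAComm_opBp_opFp_phi, opAComm_opBp_opFp_psi, neg_one_zpow_sub_one,
      LinearMap.smul_apply, opBp_psi, bpPsi, sub_add_cancel]
    module

lemma opAComm_opAComm_opBp_opFm_opFm (hp : 1 ≤ p) :
    opAComm (opAComm (opBp p) (opFm p)) (opFm p) = 0 := by
  apply FockV.end_ext <;> intro m n hm _
  all_goals
    simp (disch := omega) only [opAComm_apply (opAComm _ _), opFm_phi, fmPhi, opFm_psi, fmPsi,
      map_smul, map_add, opAComm_opBp_opFm_phi, opAComm_opBp_opFm_psi, neg_one_zpow_sub_one,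
      LinearMap.zero_apply]
    push_cast
    module

end Relations

section SignedRelations

variable {p : ℕ} {ξ η ε : ℤ}

lemma IsSign.neg (hε : IsSign ε) : IsSign (-ε) := by
  rcases hε with rfl | rfl
  · exact Or.inr rfl
  · exact Or.inl (neg_neg 1)

lemma IsSign.eq_or_eq_neg (hη : IsSign η) (hε : IsSign ε) : η = ε ∨ η = -ε := by
  unfold IsSign at hη hε
  omega

lemma IsSign.sq (hε : IsSign ε) : (ε : ℂ) ^ 2 = 1 := by
  rcases hε with rfl | rfl <;> norm_num

lemma opB_one : opB p 1 = opBp p := if_pos rfl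

lemma opB_neg_one : opB p (-1) = opBm p := if_neg (by decide)

lemma opF_one : opF p 1 = opFp p := if_pos rfl

lemma opF_neg_one : opF p (-1) = opFm p := if_neg (by decide)

section Brackets

variable (c : ℂ) (X Y : Module.End ℂ (FockV p))

lemma opComm_self : opComm X X = 0 := sub_self (X * X)

lemma opComm_swap : opComm X Y = -opComm Y X := (neg_sub (Y * X) (X * Y)).symm

lemma opAComm_comm : opAComm X Y = opAComm Y X := add_comm _ _

lemma opAComm_self : opAComm X X = (2 : ℂ) • (X * X) := (two_smul ℂ _).symm

lemma opComm_smul_left : opComm (c • X) Y = c • opComm X Y := by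
  rw [opComm, opComm, smul_mul_assoc, mul_smul_comm]
  module

lemma opComm_smul_right : opComm X (c • Y) = c • opComm X Y := by
  rw [opComm, opComm, smul_mul_assoc, mul_smul_comm]
  module

lemma opAComm_smul_left : opAComm (c • X) Y = c • opAComm X Y := by
  rw [opAComm, opAComm, smul_mul_assoc, mul_smul_comm, smul_add]

lemma opComm_zero_left : opComm 0 Y = 0 := by
  rw [opComm, zero_mul, mul_zero]
  abel

lemma opComm_neg_left : opComm (-X) Y = -opComm X Y := by
  have hneg : -X = (-1 : ℂ) • X := by module
  rw [hneg, opComm_smul_left]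
  module

end Brackets

lemma opComm_opAComm_opB_neg_opB (hε : IsSign ε) :
    opComm (opAComm (opB p ε) (opB p (-ε))) (opB p ε) = (2 * ε : ℂ) • opB p ε := by
  rcases hε with rfl | rfl
  · rw [opB_one, opB_neg_one, opComm_opAComm_opBp_opBm_opBp]
    norm_num
  · rw [neg_neg, opB_one, opB_neg_one, opAComm_comm, opComm_opAComm_opBp_opBm_opBm]
    norm_num

lemma opComm_opAComm_opB_opB_opB (hξ : IsSign ξ) (hη : IsSign η) (hε : IsSign ε) :
    opComm (opAComm (opB p ξ) (opB p η)) (opB p ε) =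
      ((ε - η : ℤ) : ℂ) • opB p ξ + ((ε - ξ : ℤ) : ℂ) • opB p η := by
  have hweight := opComm_opAComm_opB_neg_opB (p := p) hε
  have hweight_neg := opComm_opAComm_opB_neg_opB (p := p) hε.neg
  rcases hξ.eq_or_eq_neg hε with hξε | hξε <;> rcases hη.eq_or_eq_neg hε with hηε | hηε <;>
    rw [hξε, hηε]
  · have hself : opComm (opB p ε * opB p ε) (opB p ε) = 0 :=
      sub_eq_zero.mpr (mul_assoc (opB p ε) (opB p ε) (opB p ε))
    rw [opAComm_self, opComm_smul_left, hself]
    simp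
  · rw [hweight]
    push_cast
    module
  · rw [opAComm_comm, hweight]
    push_cast
    module
  · rw [neg_neg] at hweight_neg
    have hsq : opComm (opB p (-ε) * opB p (-ε)) (opB p ε) =
        -opComm (opAComm (opB p (-ε)) (opB p ε)) (opB p (-ε)) :=
      lie_mul_self_left (opB p (-ε)) (opB p ε)
    rw [opAComm_self, opComm_smul_left, hsq, hweight_neg]
    push_cast
    module

lemma opComm_opComm_opF_neg_opF (hp : 1 ≤ p) (hε : IsSign ε) :
    opComm (opComm (opF p ε) (opF p (-ε))) (opF p ε) = (2 : ℂ) • opF p ε := by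
  rcases hε with rfl | rfl
  · rw [opF_one, opF_neg_one, opComm_opComm_opFp_opFm_opFp]
  · rw [neg_neg, opF_one, opF_neg_one, opComm_swap (opFm p), opComm_neg_left,
      opComm_opComm_opFp_opFm_opFm hp]
    module

lemma opComm_opComm_opF_opF_opF (hp : 1 ≤ p) (hξ : IsSign ξ) (hη : IsSign η) (hε : IsSign ε) :
    opComm (opComm (opF p ξ) (opF p η)) (opF p ε) =
      ((((ε - η) ^ 2 : ℤ) : ℂ) / 2) • opF p ξ - ((((ε - ξ) ^ 2 : ℤ) : ℂ) / 2) • opF p η := by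
  have hweight := opComm_opComm_opF_neg_opF hp hε
  have hsq : (((ε - -ε) ^ 2 : ℤ) : ℂ) / 2 = 2 := by
    push_cast
    linear_combination 2 * hε.sq
  rcases hξ.eq_or_eq_neg hε with hξε | hξε <;> rcases hη.eq_or_eq_neg hε with hηε | hηε <;>
    rw [hξε, hηε]
  · rw [opComm_self, opComm_zero_left]
    module
  · rw [hweight, hsq]
    push_cast
    module
  · rw [opComm_swap (opF p (-ε)), opComm_neg_left, hweight, hsq]
    push_cast
    module
  · rw [opComm_self, opComm_zero_left]
    module

lemma commute_opB_mul_opB_opF (hp : 1 ≤ p) (hξ : IsSign ξ) (hε : IsSign ε) :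
    Commute (opB p ξ * opB p ξ) (opF p ε) := by
  rcases hξ with rfl | rfl <;> rcases hε with rfl | rfl <;>
    simp only [opB_one, opB_neg_one, opF_one, opF_neg_one]
  · exact commute_opBp_mul_opBp_opFp
  · exact commute_opBp_mul_opBp_opFm hp
  · exact commute_opBm_mul_opBm_opFp
  · exact commute_opBm_mul_opBm_opFm hp

lemma opComm_opAComm_opBp_opBm_opF (hp : 1 ≤ p) (hε : IsSign ε) :
    opComm (opAComm (opBp p) (opBm p)) (opF p ε) = 0 := by
  rcases hε with rfl | rfl
  · rw [opF_one, opComm_opAComm_opBp_opBm_opFp]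
  · rw [opF_neg_one, opComm_opAComm_opBp_opBm_opFm hp]

lemma opComm_opAComm_opB_opB_opF (hp : 1 ≤ p) (hξ : IsSign ξ) (hη : IsSign η) (hε : IsSign ε) :
    opComm (opAComm (opB p ξ) (opB p η)) (opF p ε) = 0 := by
  rcases hξ.eq_or_eq_neg hη with rfl | rfl
  · rw [opAComm_self, opComm_smul_left]
    have hcomm : opComm (opB p ξ * opB p ξ) (opF p ε) = 0 :=
      sub_eq_zero.mpr (commute_opB_mul_opB_opF hp hξ hε)
    rw [hcomm, smul_zero]
  · rcases hη with rfl | rfl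
    · rw [opB_one, opB_neg_one, opAComm_comm, opComm_opAComm_opBp_opBm_opF hp hε]
    · rw [neg_neg, opB_one, opB_neg_one, opComm_opAComm_opBp_opBm_opF hp hε]

lemma opComm_opComm_opFp_opFm_opB (hε : IsSign ε) :
    opComm (opComm (opFp p) (opFm p)) (opB p ε) = 0 := by
  rcases hε with rfl | rfl
  · rw [opB_one, opComm_opComm_opFp_opFm_opBp]
  · rw [opB_neg_one, opComm_opComm_opFp_opFm_opBm]

lemma opComm_opComm_opF_opF_opB (hξ : IsSign ξ) (hη : IsSign η) (hε : IsSign ε) :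
    opComm (opComm (opF p ξ) (opF p η)) (opB p ε) = 0 := by
  rcases hξ.eq_or_eq_neg hη with rfl | rfl
  · rw [opComm_self, opComm_zero_left]
  · rcases hη with rfl | rfl
    · rw [opF_one, opF_neg_one, opComm_swap (opFm p), opComm_neg_left,
        opComm_opComm_opFp_opFm_opB hε]
      abel
    · rw [neg_neg, opF_one, opF_neg_one, opComm_opComm_opFp_opFm_opB hε]

lemma opAComm_opAComm_opBp_opFm_opFp (hp : 1 ≤ p) :
    opAComm (opAComm (opBp p) (opFm p)) (opFp p) = (2 : ℂ) • opBp p := by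
  have hswap : opAComm (opAComm (opBp p) (opFm p)) (opFp p) =
      opAComm (opAComm (opBp p) (opFp p)) (opFm p) +
        opComm (opComm (opFp p) (opFm p)) (opBp p) := 
    anticomm_anticomm_right_comm (opBp p) (opFm p) (opFp p)
  rw [hswap, opAComm_opAComm_opBp_opFp_opFm hp, opComm_opComm_opFp_opFm_opBp, add_zero]

lemma opAComm_opAComm_opBp_opF_opF (hp : 1 ≤ p) (hη : IsSign η) (hε : IsSign ε) :
    opAComm (opAComm (opBp p) (opF p η)) (opF p ε) =
      ((((ε - η) ^ 2 : ℤ) : ℂ) / 2) • opBp p := by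
  rcases hη with rfl | rfl <;> rcases hε with rfl | rfl <;> simp only [opF_one, opF_neg_one]
  · rw [opAComm_opAComm_opBp_opFp_opFp]
    simp
  · rw [opAComm_opAComm_opBp_opFp_opFm hp]
    norm_num
  · rw [opAComm_opAComm_opBp_opFm_opFp hp]
    norm_num
  · rw [opAComm_opAComm_opBp_opFm_opFm hp]
    simp

lemma opComm_opBm_mul_opBm_opBp : opComm (opBm p * opBm p) (opBp p) = (2 : ℂ) • opBm p := by
  have hsq : opComm (opBm p * opBm p) (opBp p) =
      -opComm (opAComm (opBm p) (opBp p)) (opBm p) := lie_mul_self_left (opBm p) (opBp p)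
  rw [hsq, opAComm_comm, opComm_opAComm_opBp_opBm_opBm]
  module

lemma opAComm_opAComm_opBm_opF_opF (hp : 1 ≤ p) (hη : IsSign η) (hε : IsSign ε) :
    opAComm (opAComm (opBm p) (opF p η)) (opF p ε) =
      ((((ε - η) ^ 2 : ℤ) : ℂ) / 2) • opBm p := by
  have hcomm {ζ : ℤ} (hζ : IsSign ζ) : Commute (opBm p * opBm p) (opF p ζ) :=
    by simpa only [opB_neg_one] using commute_opB_mul_opB_opF hp (Or.inr rfl) hζ
  have hhalf : (2 : ℂ) • opAComm (opAComm (opBm p) (opF p η)) (opF p ε) =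
      (2 : ℂ) • ((((ε - η) ^ 2 : ℤ) : ℂ) / 2) • opBm p := calc
    (2 : ℂ) • opAComm (opAComm (opBm p) (opF p η)) (opF p ε)
      = opAComm (opAComm (opComm (opBm p * opBm p) (opBp p)) (opF p η)) (opF p ε) := by
        rw [opComm_opBm_mul_opBm_opBp, opAComm_smul_left, opAComm_smul_left]
    _ = opAComm (opComm (opBm p * opBm p) (opAComm (opBp p) (opF p η))) (opF p ε) :=
        congrArg (opAComm · (opF p ε)) (anticomm_lie_of_commute (hcomm hη) (opBp p))
    _ = opComm (opBm p * opBm p) (opAComm (opAComm (opBp p) (opF p η)) (opF p ε)) :=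
        anticomm_lie_of_commute (hcomm hε) (opAComm (opBp p) (opF p η))
    _ = (2 : ℂ) • ((((ε - η) ^ 2 : ℤ) : ℂ) / 2) • opBm p := by
        rw [opAComm_opAComm_opBp_opF_opF hp hη hε, opComm_smul_right, opComm_opBm_mul_opBm_opBp,
          smul_comm]
  exact smul_right_injective (Module.End ℂ (FockV p)) (two_ne_zero' ℂ) hhalf

lemma opAComm_opAComm_opB_opF_opF (hp : 1 ≤ p) (hξ : IsSign ξ) (hη : IsSign η) (hε : IsSign ε) :
    opAComm (opAComm (opB p ξ) (opF p η)) (opF p ε) =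
      ((((ε - η) ^ 2 : ℤ) : ℂ) / 2) • opB p ξ := by
  rcases hξ with rfl | rfl
  · rw [opB_one, opAComm_opAComm_opBp_opF_opF hp hη hε]
  · rw [opB_neg_one, opAComm_opAComm_opBm_opF_opF hp hη hε]

lemma opComm_opAComm_opBp_opFm_opBm (hp : 1 ≤ p) :
    opComm (opAComm (opBp p) (opFm p)) (opBm p) = (-2 : ℂ) • opFm p := by
  have hbm : opAComm (opAComm (opBm p) (opFm p)) (opFm p) = 0 := by
    simpa [opF_neg_one] using opAComm_opAComm_opBm_opF_opF hp (Or.inr rfl) (Or.inr rfl)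
  exact lie_anticomm_eq_neg_two_smul (b := opBp p) (c := opBm p) (f := opFp p) (g := opFm p)
    (opAComm_opAComm_opBp_opFp_opFm hp) hbm opComm_opAComm_opBp_opFp_opBm
    (opComm_opAComm_opBp_opBm_opFm hp)
    (opComm_opComm_opFp_opFm_opFm hp)

lemma opComm_opAComm_opF_opBp_opBm (hp : 1 ≤ p) (hξ : IsSign ξ) :
    opComm (opAComm (opF p ξ) (opBp p)) (opBm p) = (-2 : ℂ) • opF p ξ := by
  rw [opAComm_comm]
  rcases hξ with rfl | rfl
  · rw [opF_one, opComm_opAComm_opBp_opFp_opBm]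
  · rw [opF_neg_one, opComm_opAComm_opBp_opFm_opBm hp]

lemma opComm_opAComm_opF_opBm_opBp (hp : 1 ≤ p) (hξ : IsSign ξ) :
    opComm (opAComm (opF p ξ) (opBm p)) (opBp p) = (2 : ℂ) • opF p ξ := by
  have hcyclic : opComm (opAComm (opF p ξ) (opBp p)) (opBm p) +
      opComm (opAComm (opBp p) (opBm p)) (opF p ξ) +
      opComm (opAComm (opBm p) (opF p ξ)) (opBp p) = 0 := 
    lie_anticomm_cyclic (opF p ξ) (opBp p) (opBm p)
  rw [opComm_opAComm_opF_opBp_opBm hp hξ, opComm_opAComm_opBp_opBm_opF hp hξ,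
    opAComm_comm (opBm p)] at hcyclic
  rw [add_zero] at hcyclic
  calc opComm (opAComm (opF p ξ) (opBm p)) (opBp p)
      = (2 : ℂ) • opF p ξ +
          ((-2 : ℂ) • opF p ξ + opComm (opAComm (opF p ξ) (opBm p)) (opBp p)) := by module
    _ = (2 : ℂ) • opF p ξ := by rw [hcyclic, add_zero]

lemma opComm_opAComm_opF_opB_opB (hp : 1 ≤ p) (hξ : IsSign ξ) (hη : IsSign η) (hε : IsSign ε) :
    opComm (opAComm (opF p ξ) (opB p η)) (opB p ε) = ((ε - η : ℤ) : ℂ) • opF p ξ := by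
  rcases hη.eq_or_eq_neg hε with rfl | rfl
  · have hsq : opComm (opB p η * opB p η) (opF p ξ) =
        -opComm (opAComm (opB p η) (opF p ξ)) (opB p η) :=
      lie_mul_self_left (opB p η) (opF p ξ)
    have hcomm : opComm (opB p η * opB p η) (opF p ξ) = 0 :=
      sub_eq_zero.mpr (commute_opB_mul_opB_opF hp hη hξ)
    calc opComm (opAComm (opF p ξ) (opB p η)) (opB p η)
        = -opComm (opB p η * opB p η) (opF p ξ) := by
          rw [opAComm_comm, hsq]
          module
      _ = ((η - η : ℤ) : ℂ) • opF p ξ := by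
          rw [hcomm]
          push_cast
          module
  · rcases hε with rfl | rfl
    · rw [opB_one, opB_neg_one, opComm_opAComm_opF_opBm_opBp hp hξ]
      norm_num
    · rw [neg_neg, opB_one, opB_neg_one, opComm_opAComm_opF_opBp_opBm hp hξ]
      norm_num

end SignedRelations

/-- The explicit Fock-like action defines a representation of `P_BF^{(1,1)}`:
the operators `b⁺, b⁻, f⁺, f⁻` on `V` satisfy all the defining relations
of the relative parabose set. -/
theorem fock_action_is_representation (p : ℕ) (hp : 1 ≤ p) :
    ∀ (ξ η ε : ℤ), IsSign ξ → IsSign η → IsSign ε →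
      (opComm (opAComm (opB p ξ) (opB p η)) (opB p ε)
        = ((ε - η : ℤ) : ℂ) • opB p ξ + ((ε - ξ : ℤ) : ℂ) • opB p η) ∧
      (opComm (opComm (opF p ξ) (opF p η)) (opF p ε)
        = ((((ε - η) ^ 2 : ℤ) : ℂ) / 2) • opF p ξ - ((((ε - ξ) ^ 2 : ℤ) : ℂ) / 2) • opF p η) ∧
      (opComm (opAComm (opB p ξ) (opB p η)) (opF p ε) = 0) ∧
      (opComm (opComm (opF p ξ) (opF p η)) (opB p ε) = 0) ∧
      (opComm (opAComm (opF p ξ) (opB p η)) (opB p ε) = ((ε - η : ℤ) : ℂ) • opF p ξ) ∧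
      (opAComm (opAComm (opB p ξ) (opF p η)) (opF p ε)
        = ((((ε - η) ^ 2 : ℤ) : ℂ) / 2) • opB p ξ) := by
  intro ξ η ε hξ hη hε
  exact ⟨opComm_opAComm_opB_opB_opB hξ hη hε, opComm_opComm_opF_opF_opF hp hξ hη hε,
    opComm_opAComm_opB_opB_opF hp hξ hη hε, opComm_opComm_opF_opF_opB hξ hη hε,
    opComm_opAComm_opF_opB_opB hp hξ hη hε, opAComm_opAComm_opB_opF_opF hp hξ hη hε⟩
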